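/- Fix p > 1, t > 0, ρ > t. The operator E_p on ℓ²(ℕ₀) with entries E_p(j,k) = p^(−(ρ+t)j/2)·p^(t·max(j,k))·p^(−(ρ+t)k/2) has exactly one positive eigenvalue (counted with multiplicity). -/

import Mathlib

open Real

/-- The entries of the matrix `E_p`. -/
noncomputable def Ep (p t ρ : ℝ) (j k : ℕ) : ℝ :=
  p ^ (-(ρ + t) * j / 2) * p ^ (t * (max j k : ℕ)) * p ^ (-(ρ + t) * k / 2)

open scoped InnerProductSpace
open Filter Topology

section RankOneDomination

variable {H : Type*} [NormedAddCommGroup H] [InnerProductSpace ℝ H]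

/-- The quadratic form `m ‖x‖² - ⟪A x, x⟫` at `x + s • y`, for symmetric `A`. -/
theorem shifted_form_add_smul {A : H →L[ℝ] H} (hA : ∀ x y, ⟪A x, y⟫_ℝ = ⟪A y, x⟫_ℝ)
    (m s : ℝ) (x y : H) :
    m * ‖x + s • y‖ ^ 2 - ⟪A (x + s • y), x + s • y⟫_ℝ =
      (m * ‖y‖ ^ 2 - ⟪A y, y⟫_ℝ) * (s * s) + 2 * ⟪m • x - A x, y⟫_ℝ * s +
        (m * ‖x‖ ^ 2 - ⟪A x, x⟫_ℝ) := by
  simp only [← real_inner_self_eq_norm_sq, map_add, map_smul, inner_add_left, inner_add_right,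
    inner_sub_left, real_inner_smul_left, real_inner_smul_right, hA y x, real_inner_comm x y]
  ring

/-- A null vector of the positive semidefinite form `m ‖x‖² - ⟪A x, x⟫` is an eigenvector. -/
theorem apply_eq_smul_of_form_eq_zero {A : H →L[ℝ] H} (hA : ∀ x y, ⟪A x, y⟫_ℝ = ⟪A y, x⟫_ℝ)
    {m : ℝ} (hm : ∀ x, ⟪A x, x⟫_ℝ ≤ m * ‖x‖ ^ 2) {x : H} (hx : m * ‖x‖ ^ 2 ≤ ⟪A x, x⟫_ℝ) :
    A x = m • x := by
  set w := m • x - A x with hw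
  have h : ∀ s : ℝ, 0 ≤ (m * ‖w‖ ^ 2 - ⟪A w, w⟫_ℝ) * (s * s) + 2 * ⟪w, w⟫_ℝ * s + 0 := by
    intro s
    have := shifted_form_add_smul hA m s x w
    have := hm (x + s • w)
    linarith
  have h := discrim_le_zero h
  rw [discrim] at h
  have h0 : ⟪w, w⟫_ℝ = 0 := by nlinarith
  exact (sub_eq_zero.1 (inner_self_eq_zero.1 h0)).symm

/-- A symmetric operator dominated by a rank-one form attains its largest Rayleigh quotient, if
that is positive. -/
theorem exists_pos_eigenvector_of_le_rank_one [CompleteSpace H] {A : H →L[ℝ] H}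
    (hA : ∀ x y, ⟪A x, y⟫_ℝ = ⟪A y, x⟫_ℝ) {φ : H →L[ℝ] ℝ} {c : ℝ}
    (hc : ∀ x, ⟪A x, x⟫_ℝ ≤ c * φ x ^ 2) {e : H} (he : 0 < ⟪A e, e⟫_ℝ) :
    ∃ m : ℝ, 0 < m ∧ ∃ x, x ≠ 0 ∧ A x = m • x := by
  set S : Set ℝ := {m | ∀ x, ⟪A x, x⟫_ℝ ≤ m * ‖x‖ ^ 2} with hS
  have he0 : 0 < ‖e‖ ^ 2 := by
    have : e ≠ 0 := by rintro rfl; simp at he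
    positivity
  have hbdd : ∀ m ∈ S, ⟪A e, e⟫_ℝ / ‖e‖ ^ 2 ≤ m := fun m hm => (div_le_iff₀ he0).2 (hm e)
  have hclosed : IsClosed S := by
    simp only [hS, Set.ofPred_forall]
    exact isClosed_iInter fun x => isClosed_le continuous_const (by fun_prop)
  have hne : S.Nonempty := ⟨‖A‖, fun x => by
    calc ⟪A x, x⟫_ℝ ≤ ‖A x‖ * ‖x‖ := real_inner_le_norm _ _
      _ ≤ ‖A‖ * ‖x‖ * ‖x‖ := by gcongr; exact A.le_opNorm x
      _ = ‖A‖ * ‖x‖ ^ 2 := by ring⟩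
  obtain ⟨m, hm, hleast⟩ : ∃ m ∈ S, ∀ m' ∈ S, m ≤ m' :=
    ⟨sInf S, hclosed.csInf_mem hne ⟨_, hbdd⟩, fun m' h => csInf_le ⟨_, hbdd⟩ h⟩
  have hm0 : 0 < m := (div_pos he he0).trans_le (hbdd m hm)
  have hseq : ∀ n : ℕ, ∃ x, φ x = 1 ∧ m * ‖x‖ ^ 2 - ⟪A x, x⟫_ℝ ≤ 2 * c / (n + 2) := by
    intro n
    have hn : (0 : ℝ) < n + 2 := by positivity
    have hε : 0 < m / (n + 2) := by positivity
    have hε2 : m / (n + 2) ≤ m / 2 := by gcongr; linarith [(Nat.cast_nonneg n : (0 : ℝ) ≤ n)]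
    obtain ⟨y, hy⟩ : ∃ y, (m - m / (n + 2)) * ‖y‖ ^ 2 < ⟪A y, y⟫_ℝ := by
      by_contra! h
      linarith [hleast _ h]
    have hy0 : φ y ≠ 0 := by
      intro h0
      have h1 := hc y
      have h2 : 0 ≤ (m - m / (n + 2)) * ‖y‖ ^ 2 := mul_nonneg (by linarith) (by positivity)
      rw [h0] at h1
      linarith
    have hx : φ ((φ y)⁻¹ • y) = 1 := by simp [hy0]
    have hxA : (m - m / (n + 2)) * ‖(φ y)⁻¹ • y‖ ^ 2 <
        ⟪A ((φ y)⁻¹ • y), (φ y)⁻¹ • y⟫_ℝ := by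
      rw [map_smul, real_inner_smul_left, real_inner_smul_right, norm_smul, mul_pow,
        Real.norm_eq_abs, sq_abs]
      have : 0 < (φ y)⁻¹ ^ 2 := by positivity
      nlinarith
    refine ⟨_, hx, ?_⟩
    have h1 := hc ((φ y)⁻¹ • y)
    rw [hx] at h1
    have h2 : m * ‖(φ y)⁻¹ • y‖ ^ 2 ≤ 2 * c := by
      nlinarith [sq_nonneg ‖(φ y)⁻¹ • y‖]
    calc _ ≤ m / (n + 2) * ‖(φ y)⁻¹ • y‖ ^ 2 := by linarith
      _ = m * ‖(φ y)⁻¹ • y‖ ^ 2 / (n + 2) := by ring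
      _ ≤ _ := by gcongr
  choose x hφ hx using hseq
  have hlim : Tendsto (fun n : ℕ => 2 * c / ((n : ℝ) + 2)) atTop (𝓝 0) :=
    Tendsto.const_div_atTop (tendsto_atTop_add_const_right _ _ tendsto_natCast_atTop_atTop) _
  have hc0 : 0 ≤ c := by nlinarith [hc e, sq_nonneg (φ e)]
  have hcauchy : CauchySeq x := by
    refine cauchySeq_of_le_tendsto_0 (fun n : ℕ => √(4 * (2 * c / ((n : ℝ) + 2)) / m)) ?_ ?_
    · intro i j N hi hj
      have hxi : m * ‖x i‖ ^ 2 - ⟪A (x i), x i⟫_ℝ ≤ 2 * c / (N + 2) :=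
        (hx i).trans (by gcongr)
      have hxj : m * ‖x j‖ ^ 2 - ⟪A (x j), x j⟫_ℝ ≤ 2 * c / (N + 2) :=
        (hx j).trans (by gcongr)
      have hsub := shifted_form_add_smul hA m (-1) (x i) (x j)
      have hadd := shifted_form_add_smul hA m 1 (x i) (x j)
      have hφ0 := hc (x i + (-1 : ℝ) • x j)
      have hpos := hm (x i + (1 : ℝ) • x j)
      simp only [map_add, map_smul, hφ, smul_eq_mul] at hφ0
      rw [dist_eq_norm, sub_eq_add_neg, ← neg_one_smul ℝ (x j)]
      apply Real.le_sqrt_of_sq_le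
      rw [le_div_iff₀ hm0]
      simp only [map_add, map_smul] at *
      linarith
    · simpa using ((hlim.const_mul 4).div_const m).sqrt
  obtain ⟨z, hz⟩ := cauchySeq_tendsto_of_complete hcauchy
  have hφz : φ z = 1 :=
    tendsto_nhds_unique ((φ.continuous.tendsto z).comp hz) (by simp [Function.comp_def, hφ])
  have hcont : Continuous fun y => m * ‖y‖ ^ 2 - ⟪A y, y⟫_ℝ := by fun_prop
  have hQz : m * ‖z‖ ^ 2 - ⟪A z, z⟫_ℝ ≤ 0 :=
    le_of_tendsto_of_tendsto' ((hcont.tendsto z).comp hz) hlim hx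
  refine ⟨m, hm0, z, ?_, apply_eq_smul_of_form_eq_zero hA hm (by linarith)⟩
  rintro rfl
  simp at hφz

/-- Two eigenvectors, to positive eigenvalues, of a symmetric operator which is nonpositive on the
kernel of `φ` belong to the same eigenvalue. -/
theorem eigenvalue_unique_of_le_rank_one {A : H →L[ℝ] H}
    (hA : ∀ x y, ⟪A x, y⟫_ℝ = ⟪A y, x⟫_ℝ) {φ : H →L[ℝ] ℝ}
    (hφ : ∀ x, φ x = 0 → ⟪A x, x⟫_ℝ ≤ 0) {m n : ℝ} (hm : 0 < m) (hn : 0 < n) {x y : H}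
    (hx0 : x ≠ 0) (hy0 : y ≠ 0) (hx : A x = m • x) (hy : A y = n • y) : m = n := by
  by_contra hne
  have horth : ⟪x, y⟫_ℝ = 0 := by
    have h := hA x y
    rw [hx, hy, real_inner_smul_left, real_inner_smul_left, real_inner_comm x y] at h
    exact (mul_eq_zero.1 (by linarith : (m - n) * ⟪x, y⟫_ℝ = 0)).resolve_left (sub_ne_zero.2 hne)
  have hφx : φ x ≠ 0 := by
    intro h0
    have h := hφ x h0
    rw [hx, real_inner_smul_left, real_inner_self_eq_norm_sq] at h
    have : 0 < m * ‖x‖ ^ 2 := by positivity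
    linarith
  have h := hφ (φ y • x - φ x • y) (by simp [mul_comm])
  simp only [map_sub, map_smul, hx, hy, inner_sub_left, inner_sub_right, real_inner_smul_left,
    real_inner_smul_right, horth, real_inner_comm x y, real_inner_self_eq_norm_sq] at h
  have h1 : 0 ≤ m * (φ y ^ 2 * ‖x‖ ^ 2) := by positivity
  have h2 : 0 < n * (φ x ^ 2 * ‖y‖ ^ 2) := by positivity
  linarith

/-- An operator which is nonpositive on the kernel of `φ` has only simple positive eigenvalues. -/
theorem finrank_eigenspace_eq_one_of_le_rank_one {A : H →L[ℝ] H} {φ : H →L[ℝ] ℝ}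
    (hφ : ∀ x, φ x = 0 → ⟪A x, x⟫_ℝ ≤ 0) {m : ℝ} (hm : 0 < m)
    (h : Module.End.HasEigenvalue (A : H →ₗ[ℝ] H) m) :
    Module.finrank ℝ (Module.End.eigenspace (A : H →ₗ[ℝ] H) m) = 1 := by
  have hker : ∀ x, A x = m • x → φ x = 0 → x = 0 := by
    intro x hx h0
    have h := hφ x h0
    rw [hx, real_inner_smul_left, real_inner_self_eq_norm_sq] at h
    by_contra hne
    have : 0 < m * ‖x‖ ^ 2 := by positivity
    linarith
  obtain ⟨x, hx⟩ := h.exists_hasEigenvector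
  have hxA : A x = m • x := hx.apply_eq_smul
  have hφx : φ x ≠ 0 := fun h0 => hx.2 (hker x hxA h0)
  refine finrank_eq_one_iff'.2 ⟨⟨x, hx.1⟩, fun h0 => hx.2 (congrArg Subtype.val h0), ?_⟩
  rintro ⟨y, hy⟩
  have hyA : A y = m • y := Module.End.mem_eigenspace_iff.1 hy
  refine ⟨φ y / φ x, Subtype.ext (sub_eq_zero.1 (hker _ ?_ ?_))⟩
  · simp [hxA, hyA, smul_sub, smul_comm m]
  · simp [hφx]

end RankOneDomination

/-- The kernel `g (min j k)` is positive semidefinite for nonnegative monotone `g`. -/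
theorem sum_min_kernel_nonneg (n : ℕ) : ∀ {g : ℕ → ℝ}, Monotone g → 0 ≤ g 0 → ∀ y : ℕ → ℝ,
    0 ≤ ∑ j ∈ Finset.range n, ∑ k ∈ Finset.range n, g (min j k) * (y j * y k) := by
  induction n with
  | zero => simp
  | succ n ih =>
    intro g hg h0 y
    have key := ih (g := fun i => g (i + 1) - g 0) (fun a b hab => by
      have := hg (Nat.succ_le_succ hab)
      simpa using this) (by simpa using hg (Nat.zero_le 1)) (fun i => y (i + 1))
    have hsq : 0 ≤ g 0 * (∑ j ∈ Finset.range (n + 1), y j) ^ 2 := by positivity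
    refine (add_nonneg key hsq).trans_eq ?_
    rw [sq, Finset.sum_mul_sum]
    simp only [Finset.sum_range_succ', Nat.add_min_add_right, Nat.zero_min, Nat.min_zero, sub_mul,
      Finset.sum_sub_distrib, Finset.sum_add_distrib, mul_add, Finset.mul_sum]
    ring

section Kernel

variable {p t ρ : ℝ}

theorem Ep_comm (p t ρ : ℝ) (j k : ℕ) : Ep p t ρ j k = Ep p t ρ k j := by
  rw [Ep, Ep, max_comm]
  ring

/-- The difference between the rank-one part and `E_p` is a kernel in `min j k`, up to a diagonal
rescaling. -/
theorem rank_one_sub_Ep (hp : 1 < p) (j k : ℕ) :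
    p ^ t * ((p ^ ((t - ρ) / 2)) ^ j * (p ^ ((t - ρ) / 2)) ^ k) - Ep p t ρ j k =
      (p ^ t - p ^ (-t * (min j k : ℕ))) *
        ((p ^ ((t - ρ) / 2)) ^ j * (p ^ ((t - ρ) / 2)) ^ k) := by
  have hp0 : 0 < p := one_pos.trans hp
  have hmm : ((max j k : ℕ) : ℝ) = j + k - (min j k : ℕ) := by
    rw [eq_sub_iff_add_eq]
    exact_mod_cast max_add_min j k
  rw [sub_mul, sub_right_inj, Ep, hmm, ← Real.rpow_mul_natCast hp0.le,
    ← Real.rpow_mul_natCast hp0.le]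
  simp only [← Real.rpow_add hp0]
  congr 1
  ring

theorem sum_Ep_le (hp : 1 < p) (ht : 0 < t) (n : ℕ) (x : ℕ → ℝ) :
    ∑ j ∈ Finset.range n, ∑ k ∈ Finset.range n, Ep p t ρ j k * (x j * x k) ≤
      p ^ t * (∑ k ∈ Finset.range n, (p ^ ((t - ρ) / 2)) ^ k * x k) ^ 2 := by
  have hp0 : 0 < p := one_pos.trans hp
  have h := sum_min_kernel_nonneg n (g := fun i : ℕ => p ^ t - p ^ (-t * (i : ℝ)))
    (fun a b hab => sub_le_sub_left (Real.rpow_le_rpow_of_exponent_le hp.le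
      (mul_le_mul_of_nonpos_left (Nat.cast_le.2 hab) (neg_nonpos.2 ht.le))) _)
    (by simpa using Real.one_le_rpow hp.le ht.le)
    (fun k => (p ^ ((t - ρ) / 2)) ^ k * x k)
  rw [← sub_nonneg]
  refine h.trans_eq ?_
  rw [sq, Finset.sum_mul_sum, Finset.mul_sum, ← Finset.sum_sub_distrib]
  refine Finset.sum_congr rfl fun j _ => ?_
  rw [Finset.mul_sum, ← Finset.sum_sub_distrib]
  refine Finset.sum_congr rfl fun k _ => ?_
  linear_combination (-(x j * x k)) * rank_one_sub_Ep (t := t) (ρ := ρ) hp j k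

/-- A geometric sequence of ratio less than one is square summable. -/
theorem memlp_two_geometric {r : ℝ} (h0 : 0 ≤ r) (h1 : r < 1) :
    Memℓp (fun k : ℕ => r ^ k) 2 := by
  rw [memℓp_gen_iff (by norm_num)]
  have : ∀ k : ℕ, ‖r ^ k‖ ^ (2 : ENNReal).toReal = (r ^ 2) ^ k := by
    intro k
    rw [Real.norm_of_nonneg (by positivity)]
    simp [← pow_mul, mul_comm]
  simp only [this]
  exact summable_geometric_of_lt_one (by positivity) (by nlinarith)

end Kernel

section Truncation

/-- The first `n` entries of `x`, as an element of `ℓ²`. -/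
noncomputable def lpTruncate (x : lp (fun _ : ℕ => ℝ) 2) (n : ℕ) : lp (fun _ : ℕ => ℝ) 2 :=
  ∑ k ∈ Finset.range n, lp.single 2 k (x k)

theorem tendsto_lpTruncate (x : lp (fun _ : ℕ => ℝ) 2) :
    Tendsto (lpTruncate x) atTop (𝓝 x) :=
  (lp.hasSum_single (by norm_num) x).tendsto_sum_nat

theorem inner_lpTruncate (x y : lp (fun _ : ℕ => ℝ) 2) (n : ℕ) :
    ⟪x, lpTruncate y n⟫_ℝ = ∑ k ∈ Finset.range n, x k * y k := by
  simp [lpTruncate, inner_sum, lp.inner_single_right, mul_comm]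

theorem inner_apply_lpTruncate {a : ℕ → ℕ → ℝ}
    {A : lp (fun _ : ℕ => ℝ) 2 →L[ℝ] lp (fun _ : ℕ => ℝ) 2}
    (hA : ∀ (x : lp (fun _ : ℕ => ℝ) 2) (j : ℕ), (A x : ℕ → ℝ) j = ∑' k : ℕ, a j k * x k)
    (x y : lp (fun _ : ℕ => ℝ) 2) (n : ℕ) :
    ⟪A (lpTruncate x n), lpTruncate y n⟫_ℝ =
      ∑ j ∈ Finset.range n, ∑ k ∈ Finset.range n, a j k * (y j * x k) := by
  have hsingle : ∀ (k j : ℕ) (c : ℝ), (A (lp.single 2 k c) : ℕ → ℝ) j = a j k * c := by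
    intro k j c
    rw [hA, tsum_eq_single k fun i hi => by simp [lp.single_apply, hi]]
    simp
  rw [inner_lpTruncate]
  refine Finset.sum_congr rfl fun j _ => ?_
  rw [lpTruncate, map_sum, lp.coeFn_sum, Finset.sum_apply, Finset.sum_mul]
  refine Finset.sum_congr rfl fun k _ => ?_
  rw [hsingle]
  ring

theorem tendsto_inner_apply_lpTruncate
    (A : lp (fun _ : ℕ => ℝ) 2 →L[ℝ] lp (fun _ : ℕ => ℝ) 2) (x y : lp (fun _ : ℕ => ℝ) 2) :
    Tendsto (fun n => ⟪A (lpTruncate x n), lpTruncate y n⟫_ℝ) atTop (𝓝 ⟪A x, y⟫_ℝ) :=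
  ((A.continuous.tendsto x).comp (tendsto_lpTruncate x)).inner (tendsto_lpTruncate y)

end Truncation

/-- `E_p`, as an operator on `ℓ²(ℕ₀)`, has exactly one positive eigenvalue, counted with
multiplicity: there is a unique `μ > 0` which is an eigenvalue, and its eigenspace is
one-dimensional. -/
theorem Ep_one_positive_eigenvalue (p t ρ : ℝ) (hp : 1 < p) (ht : 0 < t) (hρ : t < ρ)
    (A : lp (fun _ : ℕ => ℝ) 2 →L[ℝ] lp (fun _ : ℕ => ℝ) 2)
    (hA : ∀ (x : lp (fun _ : ℕ => ℝ) 2) (j : ℕ), (A x : ℕ → ℝ) j = ∑' k : ℕ, Ep p t ρ j k * (x : ℕ → ℝ) k) :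
    (∃! μ : ℝ, 0 < μ ∧ Module.End.HasEigenvalue (A : lp (fun _ : ℕ => ℝ) 2 →ₗ[ℝ] lp (fun _ : ℕ => ℝ) 2) μ)
    ∧ ∀ μ : ℝ, 0 < μ →
        Module.End.HasEigenvalue (A : lp (fun _ : ℕ => ℝ) 2 →ₗ[ℝ] lp (fun _ : ℕ => ℝ) 2) μ →
        Module.finrank ℝ
          (Module.End.eigenspace (A : lp (fun _ : ℕ => ℝ) 2 →ₗ[ℝ] lp (fun _ : ℕ => ℝ) 2) μ) = 1 := by
  have hp0 : 0 < p := one_pos.trans hp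
  have hr1 : p ^ ((t - ρ) / 2) < 1 := Real.rpow_lt_one_of_one_lt_of_neg hp (by linarith)
  set ψ : lp (fun _ : ℕ => ℝ) 2 := ⟨_, memlp_two_geometric (by positivity) hr1⟩
  have hsymm : ∀ x y, ⟪A x, y⟫_ℝ = ⟪A y, x⟫_ℝ := by
    intro x y
    refine tendsto_nhds_unique (tendsto_inner_apply_lpTruncate A x y)
      ((tendsto_inner_apply_lpTruncate A y x).congr fun n => ?_)
    rw [inner_apply_lpTruncate hA, inner_apply_lpTruncate hA, Finset.sum_comm]
    refine Finset.sum_congr rfl fun j _ => Finset.sum_congr rfl fun k _ => ?_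
    rw [Ep_comm, mul_comm (x k)]
  have hle : ∀ x, ⟪A x, x⟫_ℝ ≤ p ^ t * (innerSL ℝ ψ x) ^ 2 := by
    intro x
    have hlim : Tendsto (fun n => p ^ t * (⟪ψ, lpTruncate x n⟫_ℝ) ^ 2) atTop
        (𝓝 (p ^ t * (⟪ψ, x⟫_ℝ) ^ 2)) :=
      (((tendsto_const_nhds (x := ψ)).inner (tendsto_lpTruncate x)).pow 2).const_mul _
    refine le_of_tendsto_of_tendsto' (tendsto_inner_apply_lpTruncate A x x) hlim fun n => ?_
    rw [inner_apply_lpTruncate hA, inner_lpTruncate]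
    exact sum_Ep_le hp ht n x
  have hker : ∀ x, innerSL ℝ ψ x = 0 → ⟪A x, x⟫_ℝ ≤ 0 := fun x h0 => by simpa [h0] using hle x
  have he : 0 < ⟪A (lp.single 2 0 1), lp.single 2 0 1⟫_ℝ := by
    have h := inner_apply_lpTruncate hA (lp.single 2 0 1) (lp.single 2 0 1) 1
    simp [lpTruncate, Ep] at h
    rw [h]
    exact one_pos
  obtain ⟨m, hm, x, hx0, hx⟩ := exists_pos_eigenvector_of_le_rank_one hsymm hle he
  refine ⟨⟨m, ⟨hm, Module.End.hasEigenvalue_of_hasEigenvector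
    ⟨Module.End.mem_eigenspace_iff.2 hx, hx0⟩⟩, ?_⟩,
    fun μ hμ h => finrank_eigenspace_eq_one_of_le_rank_one hker hμ h⟩
  rintro μ ⟨hμ, h⟩
  obtain ⟨y, hy⟩ := h.exists_hasEigenvector
  exact eigenvalue_unique_of_le_rank_one hsymm hker hμ hm hy.2 hx0 hy.apply_eq_smul hx
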